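/- Let α < 0, γ < 0 and β ∈ ℝ, and let (u,v) be a regular solution of the Schrödinger–Korteweg–de Vries system with these parameters. Then for all exponents p₁ and m with 0 < p₁ < 2/3 and 0 < m < 1 − p₁/2, and every constant K > 0, liminf_{t→∞} ∫_{{x : |x − t^m| ≤ K·t^{p₁}}} ( v(t,x)² + |u(t,x)|² ) dx = 0. -/

import Mathlib

open MeasureTheory Filter

/-- A regular solution of the Schrödinger–Korteweg–de Vries system
    `i ∂ₜu + ∂ₓ²u = α u v + β u |u|²`,
    `∂ₜv + ∂ₓ³v + v ∂ₓv = γ ∂ₓ(|u|²)`: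
    `u, v` are smooth in `(t,x)`, Schwartz in `x` for each fixed `t`, satisfy the
    equations pointwise, and have uniformly-in-time bounded `H¹ₓ` norms. -/
def IsSKdVSolution (α β γ : ℝ) (u : ℝ → ℝ → ℂ) (v : ℝ → ℝ → ℝ) : Prop :=
  ContDiff ℝ (⊤ : ℕ∞) (fun p : ℝ × ℝ => u p.1 p.2) ∧
  ContDiff ℝ (⊤ : ℕ∞) (fun p : ℝ × ℝ => v p.1 p.2) ∧
  (∀ t : ℝ, ∃ f : SchwartzMap ℝ ℂ, ∀ x, f x = u t x) ∧
  (∀ t : ℝ, ∃ g : SchwartzMap ℝ ℝ, ∀ x, g x = v t x) ∧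
  (∀ t x : ℝ,
    Complex.I * deriv (fun s => u s x) t + iteratedDeriv 2 (u t) x
      = (α : ℂ) * u t x * (v t x : ℂ) + (β : ℂ) * u t x * (‖u t x‖ : ℂ) ^ 2) ∧
  (∀ t x : ℝ,
    deriv (fun s => v s x) t + iteratedDeriv 3 (v t) x + v t x * deriv (v t) x
      = γ * deriv (fun y => ‖u t y‖ ^ 2) x) ∧
  (∃ C : ℝ, ∀ t : ℝ,
    (∫ x : ℝ, ‖u t x‖ ^ 2) + (∫ x : ℝ, ‖deriv (u t) x‖ ^ 2) +
      (∫ x : ℝ, (v t x) ^ 2) + (∫ x : ℝ, (deriv (v t) x) ^ 2) ≤ C)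


lemma skdv_bump (K : ℝ) (hK : 0 < K) : ∃ (S s s1 s2 : ℝ → ℝ) (M : ℝ), 0 < M ∧
    (∀ z, HasDerivAt S (s z) z) ∧ (∀ z, HasDerivAt s (s1 z) z) ∧ (∀ z, HasDerivAt s1 (s2 z) z) ∧
    Continuous s2 ∧ (∀ z, 0 ≤ s z) ∧ (∀ z, s z ≤ 1) ∧ (∀ z, |z| ≤ K → s z = 1) ∧
    (∀ z, 2 * K < |z| → s z = 0 ∧ s1 z = 0 ∧ s2 z = 0) ∧
    (∀ z, |S z| ≤ M ∧ |s z| ≤ M ∧ |z * s z| ≤ M ∧ |s2 z| ≤ M) ∧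
    (∀ z w, 2 * K < z → 2 * K < w → S z = S w) ∧
    (∀ z w, z < -(2 * K) → w < -(2 * K) → S z = S w) := by
  let b : ContDiffBump (0:ℝ) := ⟨K, 2 * K, hK, by linarith⟩
  let s : ℝ → ℝ := b
  have hs : ContDiff ℝ (⊤ : ℕ∞) s := b.contDiff
  have hs1 : ContDiff ℝ (⊤ : ℕ∞) (deriv s) := ((contDiff_infty_iff_deriv (f := s)).1 hs).2
  have hs2 : ContDiff ℝ (⊤ : ℕ∞) (deriv (deriv s)) := (contDiff_infty_iff_deriv.1 hs1).2
  have hsc : Continuous s := hs.continuous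
  have hts : tsupport s = Metric.closedBall 0 (2 * K) := b.tsupport_eq
  have z0 : ∀ z, 2 * K < |z| → z ∉ tsupport s := by
    intro z hz; rw [hts]; simpa using hz
  have z1 : ∀ z, 2 * K < |z| → s z = 0 := fun z hz => image_eq_zero_of_notMem_tsupport (z0 z hz)
  have z2' : tsupport (deriv s) ⊆ tsupport s := by
    apply closure_minimal (support_deriv_subset) (isClosed_tsupport _)
  have z2 : ∀ z, 2 * K < |z| → deriv s z = 0 := fun z hz =>
    image_eq_zero_of_notMem_tsupport fun h => z0 z hz (z2' h)
  have z3 : ∀ z, 2 * K < |z| → deriv (deriv s) z = 0 := fun z hz => by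
    by_contra h
    exact z0 z hz (z2' (support_deriv_subset (f := deriv s) h))
  let S : ℝ → ℝ := fun z => ∫ y in (0:ℝ)..z, s y
  have hS : ∀ z, HasDerivAt S (s z) z := fun z =>
    intervalIntegral.integral_hasDerivAt_right (hsc.intervalIntegrable _ _)
      (hsc.stronglyMeasurableAtFilter _ _) hsc.continuousAt
  have hSc : Continuous S := continuous_iff_continuousAt.2 fun z => (hS z).continuousAt
  have hsub : ∀ z w, S w - S z = ∫ y in z..w, s y := fun z w =>
    intervalIntegral.integral_interval_sub_left (hsc.intervalIntegrable _ _) (hsc.intervalIntegrable _ _)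
  have c1 : ∀ z w, 2 * K < z → 2 * K < w → S z = S w := by
    intro z w hz hw
    have : ∫ y in z..w, s y = ∫ y in z..w, (0:ℝ) := by
      apply intervalIntegral.integral_congr
      intro y hy
      apply z1
      have := hy.1
      have h2 : 2 * K < y := lt_of_lt_of_le (lt_min hz hw) this
      exact lt_of_lt_of_le h2 (le_abs_self _)
    have h := hsub z w
    rw [this] at h; simp at h; linarith
  have c2 : ∀ z w, z < -(2 * K) → w < -(2 * K) → S z = S w := by
    intro z w hz hw
    have : ∫ y in z..w, s y = ∫ y in z..w, (0:ℝ) := by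
      apply intervalIntegral.integral_congr
      intro y hy
      apply z1
      have := hy.2
      have h2 : y < -(2 * K) := lt_of_le_of_lt this (max_lt hz hw)
      have := neg_le_abs y
      linarith
    have h := hsub z w
    rw [this] at h; simp at h; linarith
  have bd : ∀ g : ℝ → ℝ, Continuous g → ∃ B, ∀ z, |z| ≤ 3 * K → |g z| ≤ B := by
    intro g hg
    obtain ⟨B, hB⟩ := (isCompact_Icc (a := -(3*K)) (b := 3*K)).exists_bound_of_continuousOn hg.continuousOn
    exact ⟨B, fun z hz => hB z (abs_le.1 hz)⟩
  obtain ⟨B1, hB1⟩ := bd S hSc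
  obtain ⟨B2, hB2⟩ := bd _ hs2.continuous
  have bS : ∀ z, |S z| ≤ B1 := by
    intro z
    by_cases h : |z| ≤ 3 * K
    · exact hB1 z h
    · push Not at h
      rcases lt_abs.1 h with h | h
      · rw [c1 z (3*K) (by linarith) (by linarith)]
        exact hB1 _ (by rw [abs_of_pos (by linarith)])
      · rw [c2 z (-(3*K)) (by linarith) (by linarith)]
        exact hB1 _ (by rw [abs_neg, abs_of_pos (by linarith)])
  have b2 : ∀ z, |deriv (deriv s) z| ≤ |B2| := by
    intro z
    by_cases h : |z| ≤ 3 * K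
    · exact (hB2 z h).trans (le_abs_self _)
    · rw [z3 z (by linarith)]; simp
  have s0 : ∀ z, 0 ≤ s z := fun z => b.nonneg
  have s1 : ∀ z, s z ≤ 1 := fun z => b.le_one
  refine ⟨S, s, deriv s, deriv (deriv s), |B1| + 1 + 2 * K + |B2|, by positivity, hS,
    fun z => (hs.differentiable (by simp) z).hasDerivAt,
    fun z => (hs1.differentiable (by simp) z).hasDerivAt, hs2.continuous, s0, s1, ?_,
    fun z hz => ⟨z1 z hz, z2 z hz, z3 z hz⟩, ?_, c1, c2⟩
  · intro z hz
    apply b.one_of_mem_closedBall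
    simpa using hz
  · intro z
    have a1 := abs_nonneg B1
    have a2 := abs_nonneg B2
    have a3 := le_abs_self B1
    refine ⟨by linarith [bS z], ?_, ?_, by linarith [b2 z]⟩
    · rw [abs_of_nonneg (s0 z)]; linarith [s1 z]
    · by_cases h : 2 * K < |z|
      · rw [z1 z h]; simp; positivity
      · rw [abs_mul, abs_of_nonneg (s0 z)]
        nlinarith [s1 z, s0 z, abs_nonneg z]

lemma skdv_cs (f g : ℝ → ℝ) (C M R c : ℝ) (hf : Integrable (fun x => f x ^ 2)) (hC : ∫ x, f x ^ 2 ≤ C)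
    (hM : 0 ≤ M) (hR : 0 < R) (hg : ∀ x, |g x| ≤ M) (hg0 : ∀ x, R < |x - c| → g x = 0) :
    |∫ x, f x * g x| ≤ M * √R * (C + 2) := by
  have hr : 0 < √R := Real.sqrt_pos.2 hR
  have hrr : √R * √R = R := Real.mul_self_sqrt hR.le
  have hi : Integrable ((Set.Icc (c - R) (c + R)).indicator (fun _ : ℝ => (1:ℝ))) :=
    (integrable_indicator_iff measurableSet_Icc).2 (integrableOn_const (by simp))
  have h1 : ‖∫ x, f x * g x‖ ≤ ∫ x, (M * √R * f x ^ 2 +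
      M * (√R)⁻¹ * (Set.Icc (c - R) (c + R)).indicator (fun _ => (1:ℝ)) x) := by
    apply norm_integral_le_of_norm_le ((hf.const_mul _).add (hi.const_mul _))
    refine Eventually.of_forall fun x => ?_
    by_cases h : R < |x - c|
    · rw [hg0 x h]
      simp only [mul_zero, norm_zero, Pi.add_apply]
      have : 0 ≤ (Set.Icc (c - R) (c + R)).indicator (fun _ : ℝ => (1:ℝ)) x :=
        Set.indicator_nonneg (fun _ _ => zero_le_one) _
      positivity
    · have hx : x ∈ Set.Icc (c - R) (c + R) := by
        push Not at h; rw [abs_le] at h; constructor <;> linarith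
      simp only [Pi.add_apply]
      rw [Set.indicator_of_mem hx, Real.norm_eq_abs, abs_mul]
      have h2 : |f x| ≤ √R * f x ^ 2 + (√R)⁻¹ := by
        have h3 : 0 ≤ (√R)⁻¹ * ((√R * |f x| - 1) ^ 2 + √R * |f x|) := by positivity
        have h4 : (√R)⁻¹ * ((√R * |f x| - 1) ^ 2 + √R * |f x|) = √R * |f x| ^ 2 + (√R)⁻¹ - |f x| := by
          field_simp; ring
        rw [sq_abs] at h4
        linarith
      calc |f x| * |g x| ≤ |f x| * M := by gcongr; exact hg x
        _ ≤ (√R * f x ^ 2 + (√R)⁻¹) * M := by gcongr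
        _ = _ := by ring
  rw [integral_add (hf.const_mul _) (hi.const_mul _), integral_const_mul, integral_const_mul,
    integral_indicator measurableSet_Icc] at h1
  simp only [integral_const, smul_eq_mul, mul_one, measureReal_restrict_apply_univ,
    Real.volume_real_Icc] at h1
  rw [max_eq_left (by linarith), Real.norm_eq_abs] at h1
  refine h1.trans ?_
  have : M * (√R)⁻¹ * (c + R - (c - R)) = M * √R * 2 := by
    have : c + R - (c - R) = 2 * (√R * √R) := by rw [hrr]; ring
    rw [this]; field_simp
  rw [this]
  have : M * √R * ∫ x, f x ^ 2 ≤ M * √R * C := by gcongr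
  linarith

lemma skdv_deriv (F F' : ℝ → ℝ → ℝ) (t0 ε R : ℝ) (hε : 0 < ε)
    (hF : ∀ t, |t - t0| ≤ ε → Continuous (F t))
    (hd : ∀ t x, |t - t0| ≤ ε → HasDerivAt (fun s => F s x) (F' t x) t)
    (hc : ContinuousOn (fun p : ℝ × ℝ => F' p.1 p.2) (Set.Icc (t0 - ε) (t0 + ε) ×ˢ Set.univ))
    (h0 : ∀ t x, |t - t0| ≤ ε → R < |x| → F t x = 0)
    (h0' : ∀ t x, |t - t0| ≤ ε → R < |x| → F' t x = 0) :
    Integrable (F' t0) ∧ HasDerivAt (fun t => ∫ x, F t x) (∫ x, F' t0 x) t0 := by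
  obtain ⟨B, hB⟩ := ((isCompact_Icc (a := t0 - ε) (b := t0 + ε)).prod
    (isCompact_Icc (a := -R) (b := R))).exists_bound_of_continuousOn
      (hc.mono (Set.prod_mono le_rfl (Set.subset_univ _)))
  have hcs : ∀ t, |t - t0| ≤ ε → HasCompactSupport (F t) := fun t ht =>
    HasCompactSupport.of_support_subset_isCompact (isCompact_Icc (a := -R) (b := R)) (by
      intro x hx
      by_contra h
      exact hx (h0 t x ht (by
        by_contra h'; exact h (abs_le.1 (not_lt.1 h')))))
  have mem : ∀ t, t ∈ Metric.ball t0 ε → |t - t0| ≤ ε := fun t ht => by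
    rw [Metric.mem_ball, Real.dist_eq] at ht; exact ht.le
  have e0 : |t0 - t0| ≤ ε := by simp [hε.le]
  have hct : Continuous (F' t0) := by
    rw [← continuousOn_univ]
    exact hc.comp (f := fun x => (t0, x)) (by fun_prop) (fun x _ => ⟨⟨by linarith, by linarith⟩, trivial⟩)
  apply hasDerivAt_integral_of_dominated_loc_of_deriv_le (F := F) (F' := F') (Metric.ball_mem_nhds t0 hε)
    (bound := (Set.Icc (-R) R).indicator (fun _ => B))
  · filter_upwards [Metric.ball_mem_nhds t0 hε] with t ht
    exact (hF t (mem t ht)).aestronglyMeasurable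
  · exact (hF t0 e0).integrable_of_hasCompactSupport (hcs t0 e0)
  · exact hct.aestronglyMeasurable
  · refine Eventually.of_forall fun x t ht => ?_
    by_cases hx : x ∈ Set.Icc (-R) R
    · rw [Set.indicator_of_mem hx]
      have h := mem t ht
      rw [abs_le] at h
      exact hB (t, x) ⟨⟨by linarith, by linarith⟩, hx⟩
    · rw [Set.indicator_of_notMem hx, h0' t x (mem t ht) (by
        by_contra h'; exact hx (abs_le.1 (not_lt.1 h')))]
      simp
  · exact (integrable_indicator_iff measurableSet_Icc).2 (integrableOn_const (by simp))
  · exact Eventually.of_forall fun x t ht => hd t x (mem t ht)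

lemma skdv_virial (γ : ℝ) (u : ℝ → ℝ → ℂ) (v : ℝ → ℝ → ℝ)
    (hu : ContDiff ℝ (⊤ : ℕ∞) (fun p : ℝ × ℝ => u p.1 p.2))
    (hv : ContDiff ℝ (⊤ : ℕ∞) (fun p : ℝ × ℝ => v p.1 p.2))
    (heq : ∀ t x : ℝ,
      deriv (fun s => v s x) t + iteratedDeriv 3 (v t) x + v t x * deriv (v t) x
        = γ * deriv (fun y => ‖u t y‖ ^ 2) x)
    (W W1 W2 W3 Wt : ℝ → ℝ → ℝ)
    (h1 : ∀ t x, 1 < t → HasDerivAt (W t) (W1 t x) x)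
    (h2 : ∀ t x, 1 < t → HasDerivAt (W1 t) (W2 t x) x)
    (h3 : ∀ t x, 1 < t → HasDerivAt (W2 t) (W3 t x) x)
    (h3c : ∀ t, 1 < t → Continuous (W3 t))
    (ht : ∀ t x, 1 < t → HasDerivAt (fun s => W s x) (Wt t x) t)
    (hWc : ContinuousOn (fun p : ℝ × ℝ => W p.1 p.2) (Set.Ioi 1 ×ˢ Set.univ))
    (hWtc : ContinuousOn (fun p : ℝ × ℝ => Wt p.1 p.2) (Set.Ioi 1 ×ˢ Set.univ))
    (hsupp : ∀ T, ∃ R, ∀ t x, 1 < t → t ≤ T → R < |x| →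
      W t x = 0 ∧ W1 t x = 0 ∧ W2 t x = 0 ∧ W3 t x = 0 ∧ Wt t x = 0)
    (t : ℝ) (h1t : 1 < t) :
    HasDerivAt (fun s => ∫ x, v s x * W s x)
      (∫ x, (v t x * (Wt t x + W3 t x) + (v t x ^ 2 / 2 - γ * ‖u t x‖ ^ 2) * W1 t x)) t := by
  have hvx : ∀ t, ContDiff ℝ (⊤ : ℕ∞) (v t) := fun t => hv.comp (contDiff_prodMk_right t)
  have hux : ∀ t, ContDiff ℝ (⊤ : ℕ∞) (u t) := fun t => hu.comp (contDiff_prodMk_right t)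
  have hvt : ∀ x, ContDiff ℝ (⊤ : ℕ∞) (fun s => v s x) := fun x => hv.comp (contDiff_prodMk_left x)
  have hn : ContDiff ℝ (⊤ : ℕ∞) (fun y => ‖u t y‖ ^ 2) := (hux t).norm_sq ℝ
  have hv1 : ContDiff ℝ (⊤ : ℕ∞) (deriv (v t)) := (contDiff_infty_iff_deriv.1 (hvx t)).2
  have hv2 : ContDiff ℝ (⊤ : ℕ∞) (deriv (deriv (v t))) := (contDiff_infty_iff_deriv.1 hv1).2
  have d : ∀ {f : ℝ → ℝ}, ContDiff ℝ (⊤ : ℕ∞) f → ∀ x, HasDerivAt f (deriv f x) x :=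
    fun hf x => (hf.differentiable (by simp) x).hasDerivAt
  have hvtc : Continuous (fun p : ℝ × ℝ => deriv (fun s => v s p.2) p.1) := by
    have : (fun p : ℝ × ℝ => deriv (fun s => v s p.2) p.1)
        = fun p => fderiv ℝ (fun p : ℝ × ℝ => v p.1 p.2) p (1, 0) := by
      funext p
      have hp : HasFDerivAt (fun p : ℝ × ℝ => v p.1 p.2)
        (fderiv ℝ (fun p : ℝ × ℝ => v p.1 p.2) p) ((fun s : ℝ => (s, p.2)) p.1) :=
        (hv.differentiable (by simp) p).hasFDerivAt
      have h := hp.comp_hasDerivAt p.1 ((hasDerivAt_id p.1).prodMk (hasDerivAt_const p.1 p.2))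
      exact h.deriv
    rw [this]
    exact (hv.continuous_fderiv (by simp)).clm_apply continuous_const
  set ε := (t - 1) / 2 with hε
  have hε0 : 0 < ε := by rw [hε]; linarith
  obtain ⟨R, hR⟩ := hsupp (t + ε)
  have ineq : ∀ s, |s - t| ≤ ε → 1 < s ∧ s ≤ t + ε := by
    intro s hs; rw [abs_le] at hs; constructor <;> linarith [hs.1, hs.2]
  have hsub : Set.Icc (t - ε) (t + ε) ×ˢ (Set.univ : Set ℝ) ⊆ Set.Ioi 1 ×ˢ Set.univ :=
    Set.prod_mono (fun s hs => by have := hs.1; simp only [Set.mem_Ioi]; linarith) le_rfl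
  have key := skdv_deriv (fun s x => v s x * W s x)
    (fun s x => deriv (fun s => v s x) s * W s x + v s x * Wt s x) t ε R hε0
    (fun s hs => (hvx s).continuous.mul
      (continuous_iff_continuousAt.2 fun x => (h1 s x (ineq s hs).1).continuousAt))
    (fun s x hs => (d (hvt x) s).mul (ht s x (ineq s hs).1))
    ((hvtc.continuousOn.mul (hWc.mono hsub)).add (hv.continuous.continuousOn.mul (hWtc.mono hsub)))
    (fun s x hs hx => by rw [(hR s x (ineq s hs).1 (ineq s hs).2 hx).1, mul_zero])
    (fun s x hs hx => by
      obtain ⟨a, -, -, -, b⟩ := hR s x (ineq s hs).1 (ineq s hs).2 hx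
      rw [a, b]; ring)
  obtain ⟨kI, kD⟩ := key
  convert kD using 1
  have hW0 : ∀ x, R < |x| → W t x = 0 ∧ W1 t x = 0 ∧ W2 t x = 0 ∧ W3 t x = 0 ∧ Wt t x = 0 :=
    fun x hx => hR t x h1t (by linarith) hx
  have cs : ∀ f : ℝ → ℝ, Continuous f → (∀ x, R < |x| → f x = 0) → Integrable f := fun f hf h0 =>
    hf.integrable_of_hasCompactSupport
      (HasCompactSupport.of_support_subset_isCompact (isCompact_Icc (a := -R) (b := R)) (by
        intro x hx
        by_contra h
        exact hx (h0 x (by by_contra h'; exact h (abs_le.1 (not_lt.1 h'))))))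
  have cv := (hvx t).continuous
  have cv1 := hv1.continuous
  have cv2 := hv2.continuous
  have cn := hn.continuous
  have cW : Continuous (W t) := continuous_iff_continuousAt.2 fun x => (h1 t x h1t).continuousAt
  have cW1 : Continuous (W1 t) := continuous_iff_continuousAt.2 fun x => (h2 t x h1t).continuousAt
  have cW2 : Continuous (W2 t) := continuous_iff_continuousAt.2 fun x => (h3 t x h1t).continuousAt
  have cW3 := h3c t h1t
  have cWt : Continuous (Wt t) := by
    rw [← continuousOn_univ]
    exact hWtc.comp (f := fun x => (t, x)) (by fun_prop) (fun x _ => ⟨h1t, trivial⟩)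
  have gI : Integrable (fun x => v t x * (Wt t x + W3 t x) +
      (v t x ^ 2 / 2 - γ * ‖u t x‖ ^ 2) * W1 t x) := by
    apply cs
    · exact (cv.mul (cWt.add cW3)).add
        ((((cv.pow 2).div_const 2).sub (cn.const_mul γ)).mul cW1)
    · intro x hx
      obtain ⟨-, a, -, b, c⟩ := hW0 x hx
      rw [a, b, c]; ring
  have pI : Integrable (fun x => -(deriv (deriv (v t)) x) * W t x + deriv (v t) x * W1 t x
      - v t x * W2 t x - v t x ^ 2 / 2 * W t x + γ * ‖u t x‖ ^ 2 * W t x) := by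
    apply cs
    · exact (((((cv2.neg).mul cW).add (cv1.mul cW1)).sub (cv.mul cW2)).sub
        (((cv.pow 2).div_const 2).mul cW)).add ((cn.const_mul γ).mul cW)
    · intro x hx
      obtain ⟨a, b, c, -, -⟩ := hW0 x hx
      rw [a, b, c]; ring
  have hP := integral_eq_zero_of_hasDerivAt_of_integrable
    (f := fun x => -(deriv (deriv (v t)) x) * W t x + deriv (v t) x * W1 t x
      - v t x * W2 t x - v t x ^ 2 / 2 * W t x + γ * ‖u t x‖ ^ 2 * W t x)
    (f' := fun x => (deriv (fun s => v s x) t * W t x + v t x * Wt t x) -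
      (v t x * (Wt t x + W3 t x) + (v t x ^ 2 / 2 - γ * ‖u t x‖ ^ 2) * W1 t x)) ?_
    (kI.sub gI) pI
  · rw [integral_sub kI gI] at hP
    linarith
  · intro x
    have e := heq t x
    have e3 : iteratedDeriv 3 (v t) x = deriv (deriv (deriv (v t))) x := by
      simp [iteratedDeriv_succ, iteratedDeriv_zero]
    rw [e3] at e
    have D := ((((((d hv2 x).neg).mul (h1 t x h1t)).add ((d hv1 x).mul (h2 t x h1t))).sub
      ((d (hvx t) x).mul (h3 t x h1t))).sub
      ((((d (hvx t) x).pow 2).div_const 2).mul (h1 t x h1t))).add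
      (((d hn x).const_mul γ).mul (h1 t x h1t))
    refine HasDerivAt.congr_deriv D ?_
    have e' : deriv (fun s => v s x) t = γ * deriv (fun y => ‖u t y‖ ^ 2) x
      - deriv (deriv (deriv (v t))) x - v t x * deriv (v t) x := by linarith
    rw [e']
    simp only [Pi.neg_apply, Pi.pow_apply, Nat.cast_ofNat]
    ring

lemma skdv_small (a b c ε : ℝ) (hab : a < b) (hε : 0 < ε) :
    ∀ᶠ t : ℝ in atTop, c * t ^ a ≤ ε * t ^ b := by
  have h : Tendsto (fun t : ℝ => c * t ^ (-(b - a))) atTop (nhds (c * 0)) :=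
    (tendsto_rpow_neg_atTop (by linarith : 0 < b - a)).const_mul c
  rw [mul_zero] at h
  filter_upwards [h.eventually (gt_mem_nhds hε), eventually_gt_atTop 0] with t h1 h2
  have : t ^ a = t ^ (-(b - a)) * t ^ b := by rw [← Real.rpow_add h2]; ring_nf
  rw [this, ← mul_assoc]
  have := Real.rpow_pos_of_pos h2 b
  gcongr

/-- rescaled variable -/
noncomputable def skz (m r t x : ℝ) : ℝ := (x - t ^ m) * t ^ (-r)

/-- time derivative of the rescaled variable -/
noncomputable def skzt (m r t x : ℝ) : ℝ :=
  -(m * t ^ (m - 1)) * t ^ (-r) + (x - t ^ m) * (-r * t ^ (-r - 1))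

lemma skz_dx (m r t x : ℝ) : HasDerivAt (skz m r t) (t ^ (-r)) x := by
  have := ((hasDerivAt_id x).sub_const (t ^ m)).mul_const (t ^ (-r))
  rw [one_mul] at this
  exact this

lemma skz_dt (m r t x : ℝ) (ht : 0 < t) :
    HasDerivAt (fun s => skz m r s x) (skzt m r t x) t := by
  have h1 := (Real.hasDerivAt_rpow_const (x := t) (p := m) (Or.inl ht.ne')).const_sub x
  have h2 := Real.hasDerivAt_rpow_const (x := t) (p := -r) (Or.inl ht.ne')
  exact h1.mul h2

lemma skz_cont (m r : ℝ) :
    ContinuousOn (fun p : ℝ × ℝ => skz m r p.1 p.2) (Set.Ioi 1 ×ˢ Set.univ) := by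
  have h : ∀ a : ℝ, ContinuousOn (fun p : ℝ × ℝ => p.1 ^ a) (Set.Ioi 1 ×ˢ Set.univ) := fun a =>
    continuousOn_fst.rpow_const fun p hp => Or.inl (by
      have := hp.1; simp only [Set.mem_Ioi] at this; linarith)
  exact (continuousOn_snd.sub (h m)).mul (h (-r))

lemma skzt_cont (m r : ℝ) :
    ContinuousOn (fun p : ℝ × ℝ => skzt m r p.1 p.2) (Set.Ioi 1 ×ˢ Set.univ) := by
  have h : ∀ a : ℝ, ContinuousOn (fun p : ℝ × ℝ => p.1 ^ a) (Set.Ioi 1 ×ˢ Set.univ) := fun a =>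
    continuousOn_fst.rpow_const fun p hp => Or.inl (by
      have := hp.1; simp only [Set.mem_Ioi] at this; linarith)
  exact (((h (m-1)).const_mul m).neg.mul (h (-r))).add
    ((continuousOn_snd.sub (h m)).mul ((h (-r-1)).const_mul (-r)))

lemma skz_abs (m r t x : ℝ) (ht : 0 < t) : |skz m r t x| = |x - t ^ m| * t ^ (-r) := by
  rw [skz, abs_mul, abs_of_pos (Real.rpow_pos_of_pos ht _)]

lemma skz_out (m r t x L : ℝ) (ht : 0 < t) (h : L * t ^ r < |x - t ^ m|) : L < |skz m r t x| := by
  rw [skz_abs _ _ _ _ ht, Real.rpow_neg ht.le, ← div_eq_mul_inv, lt_div_iff₀ (Real.rpow_pos_of_pos ht _)]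
  exact h

lemma skz_in (m r t x L : ℝ) (ht : 0 < t) (h : |x - t ^ m| ≤ L * t ^ r) : |skz m r t x| ≤ L := by
  rw [skz_abs _ _ _ _ ht, Real.rpow_neg ht.le, ← div_eq_mul_inv, div_le_iff₀ (Real.rpow_pos_of_pos ht _)]
  exact h

lemma skzt_eq (m r t x : ℝ) (ht : 0 < t) :
    skzt m r t x = -(m * t ^ (m - 1 - r)) - r * t ^ (-1 : ℝ) * skz m r t x := by
  have h1 : t ^ (m - 1 - r) = t ^ (m - 1) * t ^ (-r) := by rw [← Real.rpow_add ht]; ring_nf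
  have h2 : t ^ (-r - 1) = t ^ (-1 : ℝ) * t ^ (-r) := by rw [← Real.rpow_add ht]; ring_nf
  rw [skzt, skz, h1, h2]; ring

lemma skdv_err (m K M C r t : ℝ) (s s2 f : ℝ → ℝ) (hm : 0 < m) (hK : 0 < K) (hM : 0 < M) (hr : 0 < r)
    (ht : 1 < t) (hs0 : ∀ z, 2 * K < |z| → s z = 0) (hs20 : ∀ z, 2 * K < |z| → s2 z = 0)
    (b1 : ∀ z, |s z| ≤ M) (b2 : ∀ z, |z * s z| ≤ M) (b3 : ∀ z, |s2 z| ≤ M)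
    (hf : Integrable (fun x => f x ^ 2)) (hC : ∫ x, f x ^ 2 ≤ C) :
    (∀ x, |s (skz m r t x) * skzt m r t x + s2 (skz m r t x) * t ^ (-(3 * r))| ≤
      M * (m * t ^ (m - 1 - r) + r * t ^ (-1 : ℝ) + t ^ (-(3 * r)))) ∧
    |∫ x, f x * (s (skz m r t x) * skzt m r t x + s2 (skz m r t x) * t ^ (-(3 * r)))| ≤
      M * √(2 * K) * (C + 2) * m * t ^ (m - 1 - r / 2) +
      M * √(2 * K) * (C + 2) * r * t ^ (-1 + r / 2) +
      M * √(2 * K) * (C + 2) * t ^ (-(5 * r / 2)) := by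
  have t0 : 0 < t := by linarith
  have hp : ∀ a : ℝ, 0 < t ^ a := fun a => Real.rpow_pos_of_pos t0 a
  have hb : ∀ x, |s (skz m r t x) * skzt m r t x + s2 (skz m r t x) * t ^ (-(3 * r))| ≤
      M * (m * t ^ (m - 1 - r) + r * t ^ (-1 : ℝ) + t ^ (-(3 * r))) := by
    intro x
    rw [skzt_eq _ _ _ _ t0]
    set z := skz m r t x
    have e : s z * (-(m * t ^ (m - 1 - r)) - r * t ^ (-1 : ℝ) * z) + s2 z * t ^ (-(3 * r)) =
      (m * t ^ (m - 1 - r)) * (-s z) + (r * t ^ (-1 : ℝ)) * (-(z * s z)) + t ^ (-(3 * r)) * s2 z := by ring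
    rw [e]
    refine (abs_add_three _ _ _).trans ?_
    rw [abs_mul (m * _), abs_mul (r * _), abs_mul (t ^ (-(3 * r))), abs_neg, abs_neg, abs_of_pos (hp _),
      abs_of_pos (mul_pos hm (hp _)), abs_of_pos (mul_pos hr (hp _))]
    have a1 := mul_le_mul_of_nonneg_left (b1 z) (mul_pos hm (hp (m - 1 - r))).le
    have a2 := mul_le_mul_of_nonneg_left (b2 z) (mul_pos hr (hp (-1))).le
    have a3 := mul_le_mul_of_nonneg_left (b3 z) (hp (-(3 * r))).le
    linarith
  refine ⟨hb, ?_⟩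
  have h := skdv_cs f (fun x => s (skz m r t x) * skzt m r t x + s2 (skz m r t x) * t ^ (-(3 * r)))
    C (M * (m * t ^ (m - 1 - r) + r * t ^ (-1 : ℝ) + t ^ (-(3 * r)))) (2 * K * t ^ r) (t ^ m) hf hC
    (by have := hp (m-1-r); have := hp (-1); have := hp (-(3*r)); positivity)
    (by have := hp r; positivity) hb
    (fun x hx => by
      have := skz_out m r t x (2 * K) t0 hx
      rw [hs0 _ this, hs20 _ this]; ring)
  refine h.trans (le_of_eq ?_)
  rw [Real.sqrt_mul (by positivity), Real.sqrt_eq_rpow (t ^ r), ← Real.rpow_mul t0.le]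
  have e1 : t ^ (m - 1 - r / 2) = t ^ (m - 1 - r) * t ^ (r * (1 / 2)) := by
    rw [← Real.rpow_add t0]; ring_nf
  have e2 : t ^ (-1 + r / 2) = t ^ (-1 : ℝ) * t ^ (r * (1 / 2)) := by
    rw [← Real.rpow_add t0]; ring_nf
  have e3 : t ^ (-(5 * r / 2)) = t ^ (-(3 * r)) * t ^ (r * (1 / 2)) := by
    rw [← Real.rpow_add t0]; ring_nf
  rw [e1, e2, e3]; ring

lemma skdv_main (γ : ℝ) (hγ : γ < 0) (u : ℝ → ℝ → ℂ) (v : ℝ → ℝ → ℝ) (C : ℝ)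
    (hu : ContDiff ℝ (⊤ : ℕ∞) (fun p : ℝ × ℝ => u p.1 p.2))
    (hv : ContDiff ℝ (⊤ : ℕ∞) (fun p : ℝ × ℝ => v p.1 p.2))
    (heq : ∀ t x : ℝ,
      deriv (fun s => v s x) t + iteratedDeriv 3 (v t) x + v t x * deriv (v t) x
        = γ * deriv (fun y => ‖u t y‖ ^ 2) x)
    (vI : ∀ t, Integrable (v t)) (v2I : ∀ t, Integrable (fun x => v t x ^ 2))
    (u2I : ∀ t, Integrable (fun x => ‖u t x‖ ^ 2))
    (vC : ∀ t, ∫ x, v t x ^ 2 ≤ C) (uC : ∀ t, ∫ x, ‖u t x‖ ^ 2 ≤ C)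
    (p m K : ℝ) (hp : 0 < p) (hp' : p < 2 / 3)
    (hm : 0 < m) (hm' : m < 1 - p / 2) (hK : 0 < K) (δ : ℝ) (hδ : 0 < δ)
    (hlow : ∀ᶠ t : ℝ in atTop, δ ≤
        ∫ x in {x : ℝ | |x - t ^ m| ≤ K * t ^ p}, ((v t x) ^ 2 + ‖u t x‖ ^ 2)) : False := by
  obtain ⟨S, s, s1, s2, M, hM, dS, ds, ds1, cs2, s0, sle, sone, sz, sb, cp, cn⟩ := skdv_bump K hK
  obtain ⟨q, hq⟩ : ∃ q, q = 1 - p / 2 := ⟨_, rfl⟩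
  have hpq : p < q := by linarith
  have hq0 : 0 < q := by linarith
  have hC0 : 0 ≤ C := le_trans (integral_nonneg fun x => by positivity) (vC 0)
  have cS : Continuous S := continuous_iff_continuousAt.2 fun z => (dS z).continuousAt
  have cs : Continuous s := continuous_iff_continuousAt.2 fun z => (ds z).continuousAt
  have cs1 : Continuous s1 := continuous_iff_continuousAt.2 fun z => (ds1 z).continuousAt
  have cz : ∀ r t, Continuous (skz m r t) := fun r t =>
    continuous_iff_continuousAt.2 fun x => (skz_dx m r t x).continuousAt
  have tri : ∀ r t : ℝ, 0 < t → t ^ (-r) * t ^ (-r) * t ^ (-r) = t ^ (-(3 * r)) := by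
    intro r t ht
    rw [← Real.rpow_add ht, ← Real.rpow_add ht]; ring_nf
  have tpq : ∀ t : ℝ, 1 < t → t ^ p ≤ t ^ q := fun t ht =>
    Real.rpow_le_rpow_of_exponent_le ht.le hpq.le
  -- vanishing of the weights
  have van : ∀ t x, 1 < t → 2 * K * t ^ q < |x - t ^ m| →
      2 * K < |skz m p t x| ∧ 2 * K < |skz m q t x| ∧ S (skz m p t x) = S (skz m q t x) := by
    intro t x ht hx
    have t0 : 0 < t := by linarith
    have a1 := skz_out m q t x (2 * K) t0 hx
    have a2 := skz_out m p t x (2 * K) t0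
      (lt_of_le_of_lt (mul_le_mul_of_nonneg_left (tpq t ht) (by positivity)) hx)
    refine ⟨a2, a1, ?_⟩
    have pp := Real.rpow_pos_of_pos t0 (-p)
    have pq := Real.rpow_pos_of_pos t0 (-q)
    rcases le_total 0 (x - t ^ m) with h | h
    · rw [abs_of_nonneg (show 0 ≤ skz m q t x from mul_nonneg h pq.le)] at a1
      rw [abs_of_nonneg (show 0 ≤ skz m p t x from mul_nonneg h pp.le)] at a2
      exact cp _ _ a2 a1
    · rw [abs_of_nonpos (show skz m q t x ≤ 0 from mul_nonpos_of_nonpos_of_nonneg h pq.le)] at a1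
      rw [abs_of_nonpos (show skz m p t x ≤ 0 from mul_nonpos_of_nonpos_of_nonneg h pp.le)] at a2
      exact cn _ _ (by linarith) (by linarith)
  have vir := skdv_virial γ u v hu hv heq
    (fun t x => S (skz m p t x) - S (skz m q t x))
    (fun t x => s (skz m p t x) * t ^ (-p) - s (skz m q t x) * t ^ (-q))
    (fun t x => s1 (skz m p t x) * t ^ (-p) * t ^ (-p) - s1 (skz m q t x) * t ^ (-q) * t ^ (-q))
    (fun t x => s2 (skz m p t x) * t ^ (-p) * t ^ (-p) * t ^ (-p)
      - s2 (skz m q t x) * t ^ (-q) * t ^ (-q) * t ^ (-q))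
    (fun t x => s (skz m p t x) * skzt m p t x - s (skz m q t x) * skzt m q t x)
    (fun t x _ => ((dS _).comp x (skz_dx m p t x)).sub ((dS _).comp x (skz_dx m q t x)))
    (fun t x _ => (((ds _).comp x (skz_dx m p t x)).mul_const _).sub
      (((ds _).comp x (skz_dx m q t x)).mul_const _))
    (fun t x _ => ((((ds1 _).comp x (skz_dx m p t x)).mul_const _).mul_const _).sub
      ((((ds1 _).comp x (skz_dx m q t x)).mul_const _).mul_const _))
    (fun t _ => by
      have a := cs2.comp (cz p t)
      have b := cs2.comp (cz q t)
      exact (((a.mul_const _).mul_const _).mul_const _).sub (((b.mul_const _).mul_const _).mul_const _))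
    (fun t x ht => ((dS _).comp t (skz_dt m p t x (by linarith))).sub
      ((dS _).comp t (skz_dt m q t x (by linarith))))
    ((cS.comp_continuousOn (skz_cont m p)).sub (cS.comp_continuousOn (skz_cont m q)))
    (((cs.comp_continuousOn (skz_cont m p)).mul (skzt_cont m p)).sub
      ((cs.comp_continuousOn (skz_cont m q)).mul (skzt_cont m q)))
    (by
      intro T
      refine ⟨T ^ m + 2 * K * T ^ q, fun t x ht hT hx => ?_⟩
      have t0 : 0 < t := by linarith
      have i1 : t ^ m ≤ T ^ m := Real.rpow_le_rpow t0.le hT hm.le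
      have i2 : t ^ q ≤ T ^ q := Real.rpow_le_rpow t0.le hT hq0.le
      have i3 := Real.rpow_pos_of_pos t0 m
      have i4 : |x| - |t ^ m| ≤ |x - t ^ m| := abs_sub_abs_le_abs_sub _ _
      rw [abs_of_pos i3] at i4
      have i5 := mul_le_mul_of_nonneg_left i2 (by positivity : 0 ≤ 2 * K)
      obtain ⟨a, b, c⟩ := van t x ht (by linarith)
      obtain ⟨a1, a2, a3⟩ := sz _ a
      obtain ⟨b1, b2, b3⟩ := sz _ b
      simp only [a1, a2, a3, b1, b2, b3, c]
      simp)
  set N : ℝ → ℝ := fun t => ∫ x, v t x * (S (skz m p t x) - S (skz m q t x)) with hN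
  -- bound on N
  have Nb : ∀ t, 1 < t → N t ≤ 2 * M * √(2 * K) * (C + 2) * t ^ (q / 2) := by
    intro t ht
    have t0 : 0 < t := by linarith
    have h := skdv_cs (v t) (fun x => S (skz m p t x) - S (skz m q t x)) C (2 * M) (2 * K * t ^ q)
      (t ^ m) (v2I t) (vC t) (by positivity) (by have := Real.rpow_pos_of_pos t0 q; positivity)
      (fun x => (abs_sub _ _).trans (by linarith [(sb (skz m p t x)).1, (sb (skz m q t x)).1]))
      (fun x hx => by rw [(van t x ht hx).2.2, sub_self])
    rw [Real.sqrt_mul (by positivity), Real.sqrt_eq_rpow (t ^ q), ← Real.rpow_mul t0.le,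
      show q * (1 / 2) = q / 2 by ring] at h
    have := (le_abs_self _).trans h
    rw [hN]
    linarith
  set B := M * √(2 * K) * (C + 2) with hB
  set k1 := min (1 / 2) (-γ) with hk1
  have hk1p : 0 < k1 := lt_min (by norm_num) (by linarith)
  -- lower bound on the derivative
  have low : ∀ t, 1 < t → (δ ≤
      ∫ x in {x : ℝ | |x - t ^ m| ≤ K * t ^ p}, ((v t x) ^ 2 + ‖u t x‖ ^ 2)) →
      k1 * δ * t ^ (-p) - ((1 / 2 - γ) * C) * t ^ (-q)
       - (B * m * t ^ (m - 1 - p / 2) + B * p * t ^ (-1 + p / 2) + B * t ^ (-(5 * p / 2)))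
       - (B * m * t ^ (m - 1 - q / 2) + B * q * t ^ (-1 + q / 2) + B * t ^ (-(5 * q / 2)))
      ≤ ∫ x, (v t x * ((s (skz m p t x) * skzt m p t x - s (skz m q t x) * skzt m q t x) +
        (s2 (skz m p t x) * t ^ (-p) * t ^ (-p) * t ^ (-p)
      - s2 (skz m q t x) * t ^ (-q) * t ^ (-q) * t ^ (-q))) + (v t x ^ 2 / 2 - γ * ‖u t x‖ ^ 2) *
        (s (skz m p t x) * t ^ (-p) - s (skz m q t x) * t ^ (-q))) := by
    intro t ht hd
    have t0 : 0 < t := by linarith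
    have ep := skdv_err m K M C p t s s2 (v t) hm hK hM hp ht (fun z hz => (sz z hz).1)
      (fun z hz => (sz z hz).2.2) (fun z => (sb z).2.1) (fun z => (sb z).2.2.1)
      (fun z => (sb z).2.2.2) (v2I t) (vC t)
    have eq' := skdv_err m K M C q t s s2 (v t) hm hK hM hq0 ht (fun z hz => (sz z hz).1)
      (fun z hz => (sz z hz).2.2) (fun z => (sb z).2.1) (fun z => (sb z).2.2.1)
      (fun z => (sb z).2.2.2) (v2I t) (vC t)
    have czt : ∀ r, Continuous (skzt m r t) := by intro r; unfold skzt; fun_prop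
    have cE : ∀ r, Continuous fun x =>
        s (skz m r t x) * skzt m r t x + s2 (skz m r t x) * t ^ (-(3 * r)) := fun r =>
      ((cs.comp (cz r t)).mul (czt r)).add ((cs2.comp (cz r t)).mul_const _)
    have I1 : Integrable fun x => v t x *
        (s (skz m p t x) * skzt m p t x + s2 (skz m p t x) * t ^ (-(3 * p))) :=
      (vI t).mul_bdd (cE p).aestronglyMeasurable (Eventually.of_forall ep.1)
    have I2 : Integrable fun x => v t x *
        (s (skz m q t x) * skzt m q t x + s2 (skz m q t x) * t ^ (-(3 * q))) :=
      (vI t).mul_bdd (cE q).aestronglyMeasurable (Eventually.of_forall eq'.1)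
    have ρI : Integrable fun x => v t x ^ 2 / 2 - γ * ‖u t x‖ ^ 2 :=
      ((v2I t).div_const 2).sub ((u2I t).const_mul γ)
    have J : ∀ r, Integrable fun x => (v t x ^ 2 / 2 - γ * ‖u t x‖ ^ 2) * s (skz m r t x) := fun r =>
      ρI.mul_bdd (c := 1) (cs.comp (cz r t)).aestronglyMeasurable (Eventually.of_forall fun x => by
        rw [Real.norm_eq_abs, abs_of_nonneg (s0 _)]; exact sle _)
    have ρ0 : ∀ x, 0 ≤ v t x ^ 2 / 2 - γ * ‖u t x‖ ^ 2 := fun x => by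
      have := mul_nonneg (by linarith : 0 ≤ -γ) (sq_nonneg ‖u t x‖)
      have := sq_nonneg (v t x)
      linarith
    have split : (fun x => (v t x * ((s (skz m p t x) * skzt m p t x - s (skz m q t x) * skzt m q t x) +
        (s2 (skz m p t x) * t ^ (-p) * t ^ (-p) * t ^ (-p)
      - s2 (skz m q t x) * t ^ (-q) * t ^ (-q) * t ^ (-q))) + (v t x ^ 2 / 2 - γ * ‖u t x‖ ^ 2) *
        (s (skz m p t x) * t ^ (-p) - s (skz m q t x) * t ^ (-q)))) = fun x =>
        (v t x * (s (skz m p t x) * skzt m p t x + s2 (skz m p t x) * t ^ (-(3 * p))) -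
        v t x * (s (skz m q t x) * skzt m q t x + s2 (skz m q t x) * t ^ (-(3 * q)))) +
        (t ^ (-p) * ((v t x ^ 2 / 2 - γ * ‖u t x‖ ^ 2) * s (skz m p t x)) -
        t ^ (-q) * ((v t x ^ 2 / 2 - γ * ‖u t x‖ ^ 2) * s (skz m q t x))) := by
      funext x
      rw [← tri p t t0, ← tri q t t0]; ring
    have I12 : Integrable fun x =>
        v t x * (s (skz m p t x) * skzt m p t x + s2 (skz m p t x) * t ^ (-(3 * p))) -
        v t x * (s (skz m q t x) * skzt m q t x + s2 (skz m q t x) * t ^ (-(3 * q))) := I1.sub I2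
    have J12 : Integrable fun x =>
        t ^ (-p) * ((v t x ^ 2 / 2 - γ * ‖u t x‖ ^ 2) * s (skz m p t x)) -
        t ^ (-q) * ((v t x ^ 2 / 2 - γ * ‖u t x‖ ^ 2) * s (skz m q t x)) :=
      ((J p).const_mul _).sub ((J q).const_mul _)
    rw [split, integral_add I12 J12,
      integral_sub I1 I2, integral_sub ((J p).const_mul _) ((J q).const_mul _),
      integral_const_mul, integral_const_mul]
    have A1 := (abs_le.1 ep.2).1
    have A2 := (abs_le.1 eq'.2).2
    have A3 : k1 * δ ≤ ∫ x, (v t x ^ 2 / 2 - γ * ‖u t x‖ ^ 2) * s (skz m p t x) := by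
      have hms : MeasurableSet {x : ℝ | |x - t ^ m| ≤ K * t ^ p} :=
        (isClosed_le (by fun_prop) (by fun_prop)).measurableSet
      calc k1 * δ ≤ k1 * ∫ x in {x : ℝ | |x - t ^ m| ≤ K * t ^ p}, ((v t x) ^ 2 + ‖u t x‖ ^ 2) := by
            gcongr
        _ = ∫ x in {x : ℝ | |x - t ^ m| ≤ K * t ^ p}, k1 * ((v t x) ^ 2 + ‖u t x‖ ^ 2) := by
            rw [integral_const_mul]
        _ ≤ ∫ x in {x : ℝ | |x - t ^ m| ≤ K * t ^ p},
              (v t x ^ 2 / 2 - γ * ‖u t x‖ ^ 2) * s (skz m p t x) := by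
            apply setIntegral_mono_on (((v2I t).add (u2I t)).const_mul k1).integrableOn
              (J p).integrableOn hms
            intro x hx
            rw [sone _ (skz_in m p t x K t0 hx)]
            have a1 := mul_le_mul_of_nonneg_right (min_le_left (1/2) (-γ)) (sq_nonneg (v t x))
            have a2 := mul_le_mul_of_nonneg_right (min_le_right (1/2) (-γ)) (sq_nonneg ‖u t x‖)
            rw [← hk1] at a1 a2
            simp only [Pi.add_apply]
            linarith
        _ ≤ _ := setIntegral_le_integral (J p)
            (Eventually.of_forall fun x => mul_nonneg (ρ0 x) (s0 _))
    have A4 : ∫ x, (v t x ^ 2 / 2 - γ * ‖u t x‖ ^ 2) * s (skz m q t x) ≤ (1 / 2 - γ) * C := by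
      calc _ ≤ ∫ x, (v t x ^ 2 / 2 - γ * ‖u t x‖ ^ 2) :=
            integral_mono (J q) ρI fun x => mul_le_of_le_one_right (ρ0 x) (sle _)
        _ = (∫ x, v t x ^ 2) / 2 - γ * ∫ x, ‖u t x‖ ^ 2 := by
            rw [integral_sub ((v2I t).div_const 2) ((u2I t).const_mul γ), integral_div,
              integral_const_mul]
        _ ≤ _ := by
            have := mul_le_mul_of_nonneg_left (uC t) (by linarith : 0 ≤ -γ)
            linarith [vC t]
    have A5 := mul_le_mul_of_nonneg_left A3 (Real.rpow_pos_of_pos t0 (-p)).le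
    have A6 := mul_le_mul_of_nonneg_left A4 (Real.rpow_pos_of_pos t0 (-q)).le
    linarith
  set A := k1 * δ / 8 with hA
  have hA0 : 0 < A := by positivity
  have ev : ∀ᶠ t : ℝ in atTop, 1 < t ∧ A * t ^ (-p) ≤ ∫ x, (v t x * ((s (skz m p t x) * skzt m p t x - s (skz m q t x) * skzt m q t x) +
        (s2 (skz m p t x) * t ^ (-p) * t ^ (-p) * t ^ (-p)
      - s2 (skz m q t x) * t ^ (-q) * t ^ (-q) * t ^ (-q))) + (v t x ^ 2 / 2 - γ * ‖u t x‖ ^ 2) *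
        (s (skz m p t x) * t ^ (-p) - s (skz m q t x) * t ^ (-q))) := by
    filter_upwards [hlow, eventually_gt_atTop 1,
      skdv_small (-q) (-p) ((1 / 2 - γ) * C) A (by linarith) hA0,
      skdv_small (m - 1 - p / 2) (-p) (B * m) A (by linarith) hA0,
      skdv_small (-1 + p / 2) (-p) (B * p) A (by linarith) hA0,
      skdv_small (-(5 * p / 2)) (-p) B A (by linarith) hA0,
      skdv_small (m - 1 - q / 2) (-p) (B * m) A (by linarith) hA0,
      skdv_small (-1 + q / 2) (-p) (B * q) A (by linarith) hA0,
      skdv_small (-(5 * q / 2)) (-p) B A (by linarith) hA0] with t h0 h1 h2 h3 h4 h5 h6 h7 h8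
    refine ⟨h1, ?_⟩
    have := low t h1 h0
    have e : k1 * δ * t ^ (-p) = 8 * (A * t ^ (-p)) := by rw [hA]; ring
    linarith
  obtain ⟨T, hT⟩ := eventually_atTop.1 ev
  have hp1 : 0 < 1 - p := by linarith
  have mono : MonotoneOn (fun t => N t - A / (1 - p) * t ^ (1 - p)) (Set.Ici T) := by
    have dd : ∀ t, T ≤ t → HasDerivAt (fun t => N t - A / (1 - p) * t ^ (1 - p)) _ t := fun t ht =>
      (vir t (hT t ht).1).sub (((Real.hasDerivAt_rpow_const (x := t) (p := 1 - p)
        (Or.inl (by linarith [(hT t ht).1]))).const_mul (A / (1 - p))))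
    apply monotoneOn_of_deriv_nonneg (convex_Ici T)
    · exact fun t ht => (dd t ht).continuousAt.continuousWithinAt
    · intro t ht
      rw [interior_Ici] at ht
      exact (dd t (le_of_lt ht)).differentiableAt.differentiableWithinAt
    · intro t ht
      rw [interior_Ici] at ht
      rw [(dd t (le_of_lt ht)).deriv]
      have h := (hT t (le_of_lt ht)).2
      have e : A / (1 - p) * ((1 - p) * t ^ (1 - p - 1)) = A * t ^ (-p) := by
        rw [show 1 - p - 1 = -p by ring]; field_simp
      rw [e]; linarith
  set A' := A / (1 - p) with hA'
  have hA'0 : 0 < A' := by positivity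
  set H := N T - A' * T ^ (1 - p) with hH
  obtain ⟨t, ⟨⟨h1, h2⟩, h3⟩, h4⟩ := (((eventually_ge_atTop T).and (skdv_small (q / 2) (1 - p) (2 * B) (A' / 4) (by linarith)
    (by positivity))).and (skdv_small 0 (1 - p) (-H) (A' / 4) hp1 (by positivity))).and
      (eventually_gt_atTop 1) |>.exists
  have hh := mono (Set.mem_Ici.2 le_rfl) (Set.mem_Ici.2 h1) h1
  simp only at hh
  have hn := Nb t h4
  rw [Real.rpow_zero] at h3
  have pos := mul_pos hA'0 (Real.rpow_pos_of_pos (by linarith : 0 < t) (1 - p))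
  have hBe : 2 * M * √(2 * K) * (C + 2) * t ^ (q / 2) = 2 * B * t ^ (q / 2) := by rw [hB]; ring
  linarith

/-- Decay of the `L²` mass of `(u,v)` on the moving regions `|x - t^m| ≤ K t^{p₁}`,
    `0 < p₁ < 2/3`, `0 < m < 1 - p₁/2`, along a sequence of times. -/
theorem skdv_L2_decay_noncentered (α β γ : ℝ) (hα : α < 0) (hγ : γ < 0)
    (u : ℝ → ℝ → ℂ) (v : ℝ → ℝ → ℝ) (hsol : IsSKdVSolution α β γ u v)
    (p₁ m K : ℝ) (hp₁ : 0 < p₁) (hp₁' : p₁ < 2 / 3)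
    (hm : 0 < m) (hm' : m < 1 - p₁ / 2) (hK : 0 < K) :
    liminf (fun t : ℝ =>
        ∫ x in {x : ℝ | |x - t ^ m| ≤ K * t ^ p₁}, ((v t x) ^ 2 + ‖u t x‖ ^ 2)) atTop = 0 := by
  obtain ⟨hu, hv, hus, hvs, -, heq, C, hC⟩ := hsol
  have vI : ∀ t, Integrable (v t) := fun t => by
    obtain ⟨g, hg⟩ := hvs t
    rw [← funext hg]; exact g.integrable
  have v2I : ∀ t, Integrable (fun x => v t x ^ 2) := fun t => by
    obtain ⟨g, hg⟩ := hvs t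
    rw [← funext hg]
    exact (g.memLp 2 volume).integrable_sq
  have u2I : ∀ t, Integrable (fun x => ‖u t x‖ ^ 2) := fun t => by
    obtain ⟨g, hg⟩ := hus t
    rw [← funext hg]
    exact (g.memLp 2 volume).norm.integrable_sq
  have n1 : ∀ t, 0 ≤ ∫ x : ℝ, ‖u t x‖ ^ 2 := fun t => integral_nonneg fun x => by positivity
  have n2 : ∀ t, 0 ≤ ∫ x : ℝ, ‖deriv (u t) x‖ ^ 2 := fun t => integral_nonneg fun x => by positivity
  have n3 : ∀ t, 0 ≤ ∫ x : ℝ, v t x ^ 2 := fun t => integral_nonneg fun x => by positivity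
  have n4 : ∀ t, 0 ≤ ∫ x : ℝ, deriv (v t) x ^ 2 := fun t => integral_nonneg fun x => by positivity
  have f0 : ∀ t : ℝ, 0 ≤ ∫ x in {x : ℝ | |x - t ^ m| ≤ K * t ^ p₁}, ((v t x) ^ 2 + ‖u t x‖ ^ 2) :=
    fun t => integral_nonneg fun x => by positivity
  have fC : ∀ t : ℝ, ∫ x in {x : ℝ | |x - t ^ m| ≤ K * t ^ p₁}, ((v t x) ^ 2 + ‖u t x‖ ^ 2) ≤ C := by
    intro t
    refine (setIntegral_le_integral ((v2I t).add (u2I t))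
      (Eventually.of_forall fun x => add_nonneg (sq_nonneg _) (sq_nonneg _))).trans ?_
    simp only [Pi.add_apply]
    rw [integral_add (v2I t) (u2I t)]
    linarith [hC t, n2 t, n4 t]
  have bl : IsBoundedUnder (· ≥ ·) atTop (fun t : ℝ =>
        ∫ x in {x : ℝ | |x - t ^ m| ≤ K * t ^ p₁}, ((v t x) ^ 2 + ‖u t x‖ ^ 2)) :=
    isBoundedUnder_of ⟨0, f0⟩
  have bu : IsBoundedUnder (· ≤ ·) atTop (fun t : ℝ =>
        ∫ x in {x : ℝ | |x - t ^ m| ≤ K * t ^ p₁}, ((v t x) ^ 2 + ‖u t x‖ ^ 2)) :=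
    isBoundedUnder_of ⟨C, fC⟩
  apply le_antisymm
  · by_contra h
    push Not at h
    obtain ⟨δ, hδ, hδ'⟩ := exists_between h
    exact skdv_main γ hγ u v C hu hv heq vI v2I u2I
      (fun t => by linarith [hC t, n1 t, n2 t, n4 t]) (fun t => by linarith [hC t, n3 t, n2 t, n4 t])
      p₁ m K hp₁ hp₁' hm hm' hK δ hδ
      ((eventually_lt_of_lt_liminf hδ' bl).mono fun t ht => ht.le)
  · exact le_liminf_of_le bu.isCoboundedUnder_ge (Eventually.of_forall f0)
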